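/- arXiv:1603.07061 — 2 statements merged into one kernel-verified Lean document; each statement's English description precedes it below -/
import Mathlib

section
/- Let u : S¹ → ℝ be a smooth function with mean zero and let F = −u·u″ − H(u·H(u″)). Then for every θ ∈ S¹, F(θ) ≤ (1/π) ∫_{S¹} (Hu)(θ) · (u‴(θ) + u′(θ)) dθ + (π/2) ∫_{S¹} (u′(θ))² dθ. -/
open MeasureTheory Real

/-- The `n`-th Fourier coefficient of a `2π`-periodic function `f : ℝ → ℝ`. -/
noncomputable def fourierC (f : ℝ → ℝ) (n : ℤ) : ℂ :=
  (1 / (2 * π)) * ∫ θ in (0:ℝ)..(2 * π), (f θ : ℂ) * Complex.exp (-Complex.I * (n : ℂ) * (θ : ℂ))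

/-- The Hilbert transform on the circle, sending `Σ cₙ e^{inθ}` to `Σ (−i sgn n) cₙ e^{inθ}`. -/
noncomputable def hilbertT (f : ℝ → ℝ) (θ : ℝ) : ℝ :=
  (∑' n : ℤ, -Complex.I * ((n.sign : ℤ) : ℂ) * fourierC f n *
    Complex.exp (Complex.I * (n : ℂ) * (θ : ℂ))).re

/-- The function `F = −u·u″ − H(u·H(u″))`. -/
noncomputable def Fmagic (u : ℝ → ℝ) (θ : ℝ) : ℝ :=
  -(u θ * deriv (deriv u) θ) - hilbertT (fun x => u x * hilbertT (deriv (deriv u)) x) θ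


lemma hs_conv {ι E : Type} [AddCommMonoid E] [TopologicalSpace E] {f g : ι → E} {a b : E}
    (h : HasSum f a) (h1 : ∀ i, g i = f i) (h2 : b = a) : HasSum g b := by
  rw [h2, funext h1]; exact h

/-- absolutely convergent trigonometric representation -/
def RepG {ι : Type} (φ : ι → ℤ) (a : ι → ℂ) (f : ℝ → ℝ) : Prop :=
  Summable (fun i => ‖a i‖) ∧
    ∀ x : ℝ, HasSum (fun i => a i * Complex.exp (Complex.I * (φ i : ℂ) * (x : ℂ))) (f x : ℂ)

lemma norm_cexp_int (n : ℤ) (x : ℝ) : ‖Complex.exp (Complex.I * (n : ℂ) * (x : ℂ))‖ = 1 := by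
  have : Complex.I * (n : ℂ) * (x : ℂ) = ((n * x : ℝ) : ℂ) * Complex.I := by push_cast; ring
  rw [this, Complex.norm_exp_ofReal_mul_I]

lemma norm_cexp_neg_int (n : ℤ) (x : ℝ) : ‖Complex.exp (-Complex.I * (n : ℂ) * (x : ℂ))‖ = 1 := by
  have := norm_cexp_int (-n) x
  rw [← this]; congr 2; push_cast; ring

lemma integral_cexp_int (n : ℤ) :
    ∫ x in (0:ℝ)..(2 * π), Complex.exp (Complex.I * (n : ℂ) * (x : ℂ))
      = if n = 0 then (2 * π : ℂ) else 0 := by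
  split_ifs with h
  · subst h; simp
  · rw [integral_exp_mul_complex (by simp [h])]
    have : Complex.exp (Complex.I * (n : ℂ) * ((2 * π : ℝ) : ℂ)) = 1 := by
      rw [Complex.exp_eq_one_iff]; exact ⟨n, by push_cast; ring⟩
    rw [this]; simp

lemma RepG.fourierC {ι : Type} [Countable ι] {φ : ι → ℤ} {a : ι → ℂ} {f : ℝ → ℝ}
    (h : RepG φ a f) (k : ℤ) :
    HasSum (fun i => if φ i = k then a i else 0) (fourierC f k) := by
  have key : HasSum (fun i => ∫ x in (0:ℝ)..(2 * π),
      a i * Complex.exp (Complex.I * ((φ i - k : ℤ) : ℂ) * (x : ℂ)))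
      (∫ θ in (0:ℝ)..(2 * π), (f θ : ℂ) * Complex.exp (-Complex.I * (k : ℂ) * (θ : ℂ))) := by
    apply intervalIntegral.hasSum_integral_of_dominated_convergence (fun i _ => ‖a i‖)
    · intro i
      apply Continuous.aestronglyMeasurable
      fun_prop
    · intro i
      refine Filter.Eventually.of_forall fun x _ => ?_
      rw [norm_mul, norm_cexp_int, mul_one]
    · exact Filter.Eventually.of_forall fun x _ => h.1
    · exact intervalIntegrable_const
    · refine Filter.Eventually.of_forall fun x _ => ?_
      refine hs_conv ((h.2 x).mul_right (Complex.exp (-Complex.I * (k : ℂ) * (x : ℂ)))) (fun i => ?_) rfl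
      rw [mul_assoc (a i), ← Complex.exp_add]
      congr 2; push_cast; ring
  have k2 := key.mul_left (1 / (2 * π) : ℂ)
  unfold _root_.fourierC
  refine hs_conv k2 (fun i => ?_) rfl
  rw [intervalIntegral.integral_const_mul, integral_cexp_int]
  have hp : (π : ℂ) ≠ 0 := by exact_mod_cast pi_ne_zero
  by_cases hi : φ i = k
  · simp [hi]; field_simp
  · simp [hi, sub_eq_zero]

lemma norm_sign_le (n : ℤ) : ‖((n.sign : ℤ) : ℂ)‖ ≤ 1 := by
  rcases lt_trichotomy n 0 with h | h | h
  · simp [Int.sign_eq_neg_one_of_neg h]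
  · simp [h]
  · simp [Int.sign_eq_one_of_pos h]

lemma RepG.hilbertT {ι : Type} [Countable ι] {φ : ι → ℤ} {a : ι → ℂ} {f : ℝ → ℝ}
    (h : RepG φ a f) (θ : ℝ) :
    HasSum (fun i => (-Complex.I * (((φ i).sign : ℤ) : ℂ) * a i *
      Complex.exp (Complex.I * (φ i : ℂ) * (θ : ℂ))).re) (hilbertT f θ) := by
  have hs : Summable (fun i => -Complex.I * (((φ i).sign : ℤ) : ℂ) * a i *
      Complex.exp (Complex.I * (φ i : ℂ) * (θ : ℂ))) := by
    apply Summable.of_norm_bounded h.1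
    intro i
    rw [norm_mul, norm_mul, norm_mul, norm_cexp_int, norm_neg, Complex.norm_I]
    have := norm_sign_le (φ i)
    nlinarith [norm_nonneg (a i)]
  obtain ⟨S, hS⟩ := hs
  let G : ℤ × ι → ℂ := fun p => if φ p.2 = p.1 then
    -Complex.I * ((p.1.sign : ℤ) : ℂ) * a p.2 * Complex.exp (Complex.I * (p.1 : ℂ) * (θ : ℂ)) else 0
  have hinj : Function.Injective (fun i : ι => (φ i, i)) := fun i j hij => (Prod.ext_iff.1 hij).2
  have hG : HasSum G S := by
    rw [← hinj.hasSum_iff]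
    · convert hS using 2 with i
      simp [G]
    · rintro ⟨k, i⟩ hki
      simp only [G]
      rw [if_neg]
      intro hh
      exact hki ⟨i, by simp [hh]⟩
  have h3 : HasSum (fun k : ℤ => -Complex.I * ((k.sign : ℤ) : ℂ) * _root_.fourierC f k *
    Complex.exp (Complex.I * (k : ℂ) * (θ : ℂ))) S := by
    apply hG.prod_fiberwise
    intro k
    have := ((h.fourierC k).mul_left (-Complex.I * ((k.sign : ℤ) : ℂ))).mul_right
      (Complex.exp (Complex.I * (k : ℂ) * (θ : ℂ)))
    refine hs_conv this (fun i => ?_) rfl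
    simp only [G]
    split_ifs <;> simp
  unfold _root_.hilbertT
  rw [h3.tsum_eq]
  exact Complex.hasSum_re hS

lemma summable_norm_prod {ι κ : Type} {a : ι → ℂ} {b : κ → ℂ} (ha : Summable fun i => ‖a i‖)
    (hb : Summable fun i => ‖b i‖) : Summable (fun p : ι × κ => ‖a p.1 * b p.2‖) :=
  Summable.mul_norm ha hb

lemma hasSum_prod_mul {ι κ : Type} {a : ι → ℂ} {b : κ → ℂ} {s t : ℂ} (ha : HasSum a s)
    (hb : HasSum b t) (h1 : Summable fun i => ‖a i‖) (h2 : Summable fun i => ‖b i‖) :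
    HasSum (fun p : ι × κ => a p.1 * b p.2) (s * t) :=
  HasSum.mul ha hb (summable_norm_prod h1 h2).of_norm

lemma RepG.summable {ι : Type} {φ : ι → ℤ} {a : ι → ℂ} {f : ℝ → ℝ} (hf : RepG φ a f) (x : ℝ) :
    Summable (fun i => ‖a i * Complex.exp (Complex.I * (φ i : ℂ) * (x : ℂ))‖) := by
  have : ∀ i, ‖a i * Complex.exp (Complex.I * (φ i : ℂ) * (x : ℂ))‖ = ‖a i‖ := fun i => by
    rw [norm_mul, norm_cexp_int, mul_one]
  rw [funext this]
  exact hf.1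

lemma cexp_int_add (n m : ℤ) (x : ℝ) : Complex.exp (Complex.I * ((n + m : ℤ) : ℂ) * (x : ℂ)) =
      Complex.exp (Complex.I * (n : ℂ) * (x : ℂ)) * Complex.exp (Complex.I * (m : ℂ) * (x : ℂ)) := by
  rw [← Complex.exp_add]; congr 1; push_cast; ring

lemma rep_mul {ι κ : Type} {φ : ι → ℤ} {a : ι → ℂ} {f : ℝ → ℝ} {ψ : κ → ℤ} {b : κ → ℂ}
    {g : ℝ → ℝ} (hf : RepG φ a f) (hg : RepG ψ b g) :
    RepG (fun p : ι × κ => φ p.1 + ψ p.2) (fun p : ι × κ => a p.1 * b p.2) (fun x => f x * g x) := by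
  constructor
  · exact summable_norm_prod hf.1 hg.1
  · intro x
    have s4 := hasSum_prod_mul (hf.2 x) (hg.2 x) (hf.summable x) (hg.summable x)
    refine hs_conv s4 (fun p => ?_) (Complex.ofReal_mul _ _)
    rw [cexp_int_add, mul_mul_mul_comm]

lemma RepG.parseval {a b : ℤ → ℂ} {f g : ℝ → ℝ} (hf : RepG id a f) (hg : RepG id b g) :
    HasSum (fun n => 2 * π * (a n * b (-n)).re) (∫ x in (0:ℝ)..(2 * π), f x * g x) := by
  have h := (rep_mul hf hg).fourierC 0
  have hinj : Function.Injective (fun n : ℤ => (n, -n)) := fun i j hij => (Prod.ext_iff.1 hij).1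
  rw [← hinj.hasSum_iff] at h
  · have h2 := (Complex.hasSum_re h).mul_left (2 * π)
    refine hs_conv h2 (fun n => ?_) ?_
    · simp
    · unfold _root_.fourierC
      have hp := pi_ne_zero
      have : (∫ θ in (0:ℝ)..(2 * π), ((f θ * g θ : ℝ) : ℂ) *
        Complex.exp (-Complex.I * ((0 : ℤ) : ℂ) * (θ : ℂ))) =
        ((∫ x in (0:ℝ)..(2 * π), f x * g x : ℝ) : ℂ) := by
        rw [← intervalIntegral.integral_ofReal]; simp
      rw [this]
      have : (1 / (2 * π) : ℂ) * ((∫ x in (0:ℝ)..(2 * π), f x * g x : ℝ) : ℂ)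
        = ((1 / (2 * π) * ∫ x in (0:ℝ)..(2 * π), f x * g x : ℝ) : ℂ) := by push_cast; ring
      rw [this, Complex.ofReal_re]
      field_simp
  · rintro ⟨n, m⟩ hnm
    rw [if_neg]
    intro hh
    simp only [id] at hh
    exact hnm ⟨n, by simp; omega⟩

def SmP (f : ℝ → ℝ) : Prop := ContDiff ℝ (⊤ : ℕ∞) f ∧ ∀ θ : ℝ, f (θ + 2 * π) = f θ

lemma SmP.deriv {f : ℝ → ℝ} (h : SmP f) : SmP (deriv f) := by
  refine ⟨(contDiff_infty_iff_deriv.1 h.1).2, fun θ => ?_⟩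
  have : f = fun x => f (x + 2 * π) := by ext x; exact (h.2 x).symm
  conv_rhs => rw [this]
  rw [deriv_comp_add_const]

lemma SmP.continuous {f : ℝ → ℝ} (h : SmP f) : Continuous f := h.1.continuous

lemma SmP.fourierC_deriv {f : ℝ → ℝ} (h : SmP f) (n : ℤ) :
    fourierC (_root_.deriv f) n = Complex.I * n * fourierC f n := by
  unfold fourierC
  have hd : ∀ x, HasDerivAt (fun x : ℝ => (f x : ℂ)) ((_root_.deriv f x : ℝ) : ℂ) x := fun x =>
    ((contDiff_infty_iff_deriv.1 h.1).1 x).hasDerivAt.ofReal_comp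
  have he : ∀ x : ℝ, HasDerivAt (fun x : ℝ => Complex.exp (-Complex.I * (n : ℂ) * (x : ℂ)))
      (Complex.exp (-Complex.I * (n : ℂ) * (x : ℂ)) * (-Complex.I * n)) x := by
    intro x
    have h1 : HasDerivAt (fun x : ℝ => -Complex.I * (n : ℂ) * (x : ℂ)) (-Complex.I * n) x := by
      simpa using (Complex.ofRealCLM.hasDerivAt (x := x)).const_mul (-Complex.I * (n : ℂ))
    exact h1.cexp
  have hc := h.deriv.continuous
  have hc0 := h.continuous
  have := intervalIntegral.integral_mul_deriv_eq_deriv_mul (a := 0) (b := 2 * π)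
    (fun x _ => hd x) (fun x _ => he x)
    (Continuous.intervalIntegrable (by fun_prop) _ _)
    (Continuous.intervalIntegrable (by fun_prop) _ _)
  have hp : f (2 * π) = f 0 := by simpa using h.2 0
  have e1 : Complex.exp (-Complex.I * (n : ℂ) * ((2 * π : ℝ) : ℂ)) = 1 := by
    rw [Complex.exp_eq_one_iff]; exact ⟨-n, by push_cast; ring⟩
  rw [hp, e1] at this
  simp only [Complex.ofReal_zero, mul_zero, Complex.exp_zero, sub_self, zero_sub] at this
  have h2 : ∫ x in (0:ℝ)..(2 * π), (f x : ℂ) *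
      (Complex.exp (-Complex.I * (n : ℂ) * (x : ℂ)) * (-Complex.I * n)) =
      (∫ x in (0:ℝ)..(2 * π), (f x : ℂ) * Complex.exp (-Complex.I * (n : ℂ) * (x : ℂ))) *
        (-Complex.I * n) := by
    rw [← intervalIntegral.integral_mul_const]; congr 1; ext x; ring
  rw [h2] at this
  rw [← neg_eq_iff_eq_neg] at this
  rw [← this]; ring

lemma SmP.fourierC_bdd {f : ℝ → ℝ} (h : SmP f) : ∃ C, ∀ n, ‖fourierC f n‖ ≤ C := by
  obtain ⟨C, hC⟩ := isCompact_uIcc.exists_bound_of_continuousOn (s := Set.uIcc (0:ℝ) (2 * π))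
    h.continuous.continuousOn
  refine ⟨‖(1 / (2 * π) : ℂ)‖ * (C * |2 * π - 0|), fun n => ?_⟩
  unfold fourierC
  rw [norm_mul]
  gcongr
  apply intervalIntegral.norm_integral_le_of_norm_le_const
  intro x hx
  rw [norm_mul, norm_cexp_neg_int, mul_one, Complex.norm_real]
  exact hC x (Set.uIoc_subset_uIcc hx)

lemma SmP.summable {f : ℝ → ℝ} (h : SmP f) : Summable (fun n => ‖fourierC f n‖) := by
  obtain ⟨C, hC⟩ := h.deriv.deriv.fourierC_bdd
  have hs : Summable (fun n : ℤ => (1 / (n : ℝ) ^ 2) * C + if n = 0 then ‖fourierC f 0‖ else 0) := by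
    apply ((Real.summable_one_div_int_pow.2 (by norm_num)).mul_right C).add
    exact (hasSum_ite_eq (0 : ℤ) _).summable
  apply Summable.of_nonneg_of_le (fun _ => norm_nonneg _) _ hs
  intro n
  by_cases hn : n = 0
  · simp [hn]
  · simp only [hn, if_false, add_zero]
    have := hC n
    rw [h.deriv.fourierC_deriv, h.fourierC_deriv, norm_mul, norm_mul, norm_mul, norm_mul, Complex.norm_I,
      Complex.norm_intCast] at this
    have hn' : 0 < (n : ℝ) ^ 2 := by positivity
    rw [one_div_mul_eq_div, le_div_iff₀ hn']
    have h2 := abs_mul_abs_self (n : ℝ)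
    calc _ = _ := ?_
      _ ≤ C := this
    rw [sq, ← h2]; ring

lemma SmP.rep {f : ℝ → ℝ} (h : SmP f) : RepG id (fourierC f) f := by
  refine ⟨h.summable, fun x => ?_⟩
  have : Fact (0 < 2 * π) := ⟨by positivity⟩
  have hper : Function.Periodic (fun x => (f x : ℂ)) (2 * π) := fun x => by simp [h.2 x]
  let g : C(AddCircle (2 * π), ℂ) := ⟨hper.lift, by
    have := h.continuous
    exact continuous_coinduced_dom.mpr (by
      show Continuous (fun x => (f x : ℂ))
      fun_prop)⟩
  have hg : ∀ x : ℝ, g (x : AddCircle (2 * π)) = (f x : ℂ) := fun x => rfl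
  have hp : (π : ℂ) ≠ 0 := by exact_mod_cast pi_ne_zero
  have hF : ∀ (n : ℤ) (x : ℝ), (fourier n (x : AddCircle (2 * π)) : ℂ)
      = Complex.exp (Complex.I * (n : ℂ) * (x : ℂ)) := by
    intro n x
    rw [fourier_coe_apply]
    congr 1
    push_cast
    field_simp
  have hco : ∀ n, fourierCoeff g n = fourierC f n := by
    intro n
    rw [fourierCoeff_eq_intervalIntegral _ n 0]
    unfold fourierC
    rw [Complex.real_smul]
    push_cast
    rw [zero_add]
    congr 1
    congr 1
    ext x
    rw [hF, hg, smul_eq_mul, mul_comm]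
    push_cast
    congr 2
    ring
  have := has_pointwise_sum_fourier_series_of_summable (f := g)
    (by
      have : fourierCoeff g = fourierC f := funext hco
      rw [this]; exact h.summable.of_norm) (x : AddCircle (2 * π))
  rw [hg] at this
  convert this using 2 with n
  rw [hco, hF]; rfl

lemma fourierC_neg (f : ℝ → ℝ) (n : ℤ) :
    fourierC f (-n) = (starRingEnd ℂ) (fourierC f n) := by
  unfold fourierC
  rw [map_mul, ← intervalIntegral.intervalIntegral_conj]
  congr 1
  · have : (1 / (2 * π) : ℂ) = ((1 / (2 * π) : ℝ) : ℂ) := by push_cast; rfl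
    rw [this, Complex.conj_ofReal]
  · congr 1
    ext x
    rw [map_mul, ← Complex.exp_conj]
    simp

lemma SmP.repH {f : ℝ → ℝ} (h : SmP f) :
    RepG id (fun n => -Complex.I * ((n.sign : ℤ) : ℂ) * fourierC f n) (hilbertT f) := by
  have hsum : Summable (fun n : ℤ => ‖-Complex.I * ((n.sign : ℤ) : ℂ) * fourierC f n‖) := by
    apply Summable.of_nonneg_of_le (fun _ => norm_nonneg _) _ h.summable
    intro i
    rw [norm_mul, norm_mul, norm_neg, Complex.norm_I]
    have := norm_sign_le i
    nlinarith [norm_nonneg (fourierC f i)]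
  refine ⟨hsum, fun x => ?_⟩
  have hs : Summable (fun n : ℤ => -Complex.I * ((n.sign : ℤ) : ℂ) * fourierC f n *
      Complex.exp (Complex.I * (n : ℂ) * (x : ℂ))) := by
    apply Summable.of_norm
    simpa only [norm_mul _ (Complex.exp _), norm_cexp_int, mul_one] using hsum
  have h1 := hs.hasSum
  have h2 := (Equiv.hasSum_iff (Equiv.neg ℤ)).2 h1
  have h3 := Complex.hasSum_conj (f := fun n : ℤ => -Complex.I * ((n.sign : ℤ) : ℂ) * fourierC f n *
      Complex.exp (Complex.I * (n : ℂ) * (x : ℂ)))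
      (x := (starRingEnd ℂ) (∑' n : ℤ, -Complex.I * ((n.sign : ℤ) : ℂ) * fourierC f n *
      Complex.exp (Complex.I * (n : ℂ) * (x : ℂ)))) |>.2 (by simpa using h1)
  have h4 : ((fun n : ℤ => -Complex.I * ((n.sign : ℤ) : ℂ) * fourierC f n *
      Complex.exp (Complex.I * (n : ℂ) * (x : ℂ))) ∘ (Equiv.neg ℤ)) =
      (fun n : ℤ => (starRingEnd ℂ) (-Complex.I * ((n.sign : ℤ) : ℂ) * fourierC f n *
      Complex.exp (Complex.I * (n : ℂ) * (x : ℂ)))) := by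
    ext n
    simp only [Function.comp, Equiv.neg_apply, fourierC_neg, map_mul, ← Complex.exp_conj]
    simp
  rw [h4] at h2
  have h5 := h2.unique h3
  have h6 := Complex.conj_eq_iff_re.1 h5.symm
  unfold hilbertT
  rw [h6]
  exact h1

lemma sum_box_succ (f : ℤ → ℝ) (N : ℕ) :
    ∑ n ∈ Finset.Icc (-((N + 1 : ℕ) : ℤ)) ((N + 1 : ℕ) : ℤ), f n =
      f (-((N + 1 : ℕ) : ℤ)) + f ((N + 1 : ℕ) : ℤ) + ∑ n ∈ Finset.Icc (-(N : ℤ)) (N : ℤ), f n := by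
  have : Finset.Icc (-((N + 1 : ℕ) : ℤ)) ((N + 1 : ℕ) : ℤ) =
      insert (-((N + 1 : ℕ) : ℤ)) (insert ((N + 1 : ℕ) : ℤ) (Finset.Icc (-(N : ℤ)) (N : ℤ))) := by
    ext x; simp only [Finset.mem_Icc, Finset.mem_insert]; omega
  rw [this, Finset.sum_insert, Finset.sum_insert, add_assoc]
  · simp only [Finset.mem_Icc]; omega
  · simp only [Finset.mem_Icc, Finset.mem_insert]; omega

/-- the two outer terms of a box, evaluated -/
lemma chi_pair (g : ℤ → ℝ) (hg : ∀ n, g (-n) = g n) (m : ℤ) (hm : m ≠ 0) (N : ℕ) :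
    (if (-((N + 1 : ℕ) : ℤ)) * m < 0 ∧ |m| ≤ |(-((N + 1 : ℕ) : ℤ))| then g (-((N + 1 : ℕ) : ℤ)) else 0)
    + (if ((N + 1 : ℕ) : ℤ) * m < 0 ∧ |m| ≤ |((N + 1 : ℕ) : ℤ)| then g ((N + 1 : ℕ) : ℤ) else 0)
    = if |m| ≤ N + 1 then g ((N + 1 : ℕ) : ℤ) else 0 := by
  have hN : (0 : ℤ) < ((N + 1 : ℕ) : ℤ) := by positivity
  rw [abs_neg, abs_of_pos hN, hg]
  rcases lt_or_gt_of_ne hm with h | h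
  · have h1 : ((N + 1 : ℕ) : ℤ) * m < 0 := mul_neg_of_pos_of_neg hN h
    have h2 : ¬ (-((N + 1 : ℕ) : ℤ)) * m < 0 := by rw [neg_mul]; linarith
    simp only [h1, h2, true_and, false_and, if_false, zero_add]
    push_cast; rfl
  · have h1 : 0 < ((N + 1 : ℕ) : ℤ) * m := mul_pos hN h
    have h2 : (-((N + 1 : ℕ) : ℤ)) * m < 0 := by rw [neg_mul]; linarith
    simp only [not_lt.2 h1.le, h2, true_and, false_and, if_false, add_zero]
    push_cast; rfl

lemma chi_sum_inv (m : ℤ) (hm : m ≠ 0) (N : ℕ) :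
    ∑ n ∈ Finset.Icc (-(N : ℤ)) (N : ℤ),
      (if n * m < 0 ∧ |m| ≤ |n| then 1 / (n : ℝ) ^ 2 else 0) ≤
      if |m| ≤ N then 1 / (m : ℝ) ^ 2 + 1 / |(m : ℝ)| - 1 / N else 0 := by
  have hm1 : (1 : ℤ) ≤ |m| := Int.one_le_abs hm
  induction N with
  | zero =>
    have : ¬ |m| ≤ 0 := by omega
    simp [this]
  | succ N ih =>
    rw [sum_box_succ, chi_pair (fun n => 1 / (n : ℝ) ^ 2) (by simp) m hm N]
    by_cases h1 : |m| ≤ N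
    · have h2 : |m| ≤ (N : ℤ) + 1 := by omega
      have hN : (0 : ℝ) < N := by
        have : (0 : ℤ) < N := by omega
        exact_mod_cast this
      push_cast
      rw [if_pos h1] at ih
      rw [if_pos h2, if_pos h2]
      have : 1 / ((N : ℝ) + 1) ^ 2 ≤ 1 / N - 1 / (N + 1) := by
        rw [div_sub_div _ _ (by positivity) (by positivity), div_le_div_iff₀ (by positivity) (by positivity)]
        nlinarith
      linarith
    · rw [if_neg h1] at ih
      push_cast
      by_cases h2 : |m| ≤ (N : ℤ) + 1
      · have h3 : |m| = (N : ℤ) + 1 := by omega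
        have h4 : |(m : ℝ)| = N + 1 := by exact_mod_cast h3
        rw [if_pos h2, if_pos h2, ← sq_abs (m : ℝ), h4]
        linarith
      · rw [if_neg h2, if_neg h2]; linarith

lemma chi_sum_inv' (m : ℤ) (N : ℕ) :
    ∑ n ∈ Finset.Icc (-(N : ℤ)) (N : ℤ),
      (if n * m < 0 ∧ |m| ≤ |n| then 1 / (n : ℝ) ^ 2 else 0) ≤ 1 / (m : ℝ) ^ 2 + 1 / |(m : ℝ)| := by
  by_cases hm : m = 0
  · subst hm; simp
  · refine (chi_sum_inv m hm N).trans ?_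
    split_ifs
    · have : 0 ≤ 1 / (N : ℝ) := by positivity
      linarith
    · positivity

lemma chi_sum_one (n : ℤ) (N : ℕ) :
    ∑ m ∈ Finset.Icc (-(N : ℤ)) (N : ℤ),
      (if n * m < 0 ∧ |m| ≤ |n| then (1 : ℝ) else 0) ≤ |(n : ℝ)| := by
  have hcard : ((Finset.Icc (-(N : ℤ)) (N : ℤ)).filter (fun m => n * m < 0 ∧ |m| ≤ |n|)).card
      ≤ n.natAbs := by
    rcases lt_trichotomy n 0 with h | h | h
    · have : (Finset.Icc (-(N : ℤ)) (N : ℤ)).filter (fun m => n * m < 0 ∧ |m| ≤ |n|) ⊆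
          Finset.Icc 1 (-n) := by
        intro m hm
        simp only [Finset.mem_filter, Finset.mem_Icc] at hm ⊢
        obtain ⟨_, h1, h2⟩ := hm
        have : 0 < m := by by_contra h3; nlinarith
        rw [abs_of_pos this, abs_of_neg h] at h2
        omega
      refine (Finset.card_le_card this).trans ?_
      rw [Int.card_Icc]; omega
    · subst h; simp
    · have : (Finset.Icc (-(N : ℤ)) (N : ℤ)).filter (fun m => n * m < 0 ∧ |m| ≤ |n|) ⊆
          Finset.Icc (-n) (-1) := by
        intro m hm
        simp only [Finset.mem_filter, Finset.mem_Icc] at hm ⊢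
        obtain ⟨_, h1, h2⟩ := hm
        have : m < 0 := by by_contra h3; nlinarith
        rw [abs_of_neg this, abs_of_pos h] at h2
        omega
      refine (Finset.card_le_card this).trans ?_
      rw [Int.card_Icc]; omega
  rw [Finset.sum_boole, ← Int.cast_abs, Int.abs_eq_natAbs]
  exact_mod_cast hcard

lemma schur_box (x : ℤ → ℝ) (N : ℕ) :
    ∑ p ∈ Finset.Icc (-(N : ℤ)) (N : ℤ) ×ˢ Finset.Icc (-(N : ℤ)) (N : ℤ),
      (if p.1 * p.2 < 0 ∧ |p.2| ≤ |p.1| then 2 * (p.2 : ℝ) ^ 2 * (x p.1 * x p.2) else 0) ≤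
    ∑ n ∈ Finset.Icc (-(N : ℤ)) (N : ℤ), (2 * |(n : ℝ)| ^ 3 + (n : ℝ) ^ 2) * x n ^ 2 := by
  set T := Finset.Icc (-(N : ℤ)) (N : ℤ) with hT
  have step : ∀ p ∈ T ×ˢ T,
      (if p.1 * p.2 < 0 ∧ |p.2| ≤ |p.1| then 2 * (p.2 : ℝ) ^ 2 * (x p.1 * x p.2) else 0) ≤
      (x p.1 ^ 2 * (p.1 : ℝ) ^ 2) * (if p.1 * p.2 < 0 ∧ |p.2| ≤ |p.1| then (1 : ℝ) else 0)
      + (x p.2 ^ 2 * (p.2 : ℝ) ^ 4) *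
        (if p.1 * p.2 < 0 ∧ |p.2| ≤ |p.1| then 1 / (p.1 : ℝ) ^ 2 else 0) := by
    rintro ⟨n, m⟩ _
    dsimp only
    split_ifs with h
    · have hn : (n : ℝ) ≠ 0 := by
        rintro h0
        have : n = 0 := by exact_mod_cast h0
        simp [this] at h
      have := sq_nonneg (x n * n - x m * m ^ 2 / n)
      have e : (x n * n - x m * m ^ 2 / n) ^ 2 = x n ^ 2 * n ^ 2 + x m ^ 2 * m ^ 4 * (1 / n ^ 2)
        - 2 * m ^ 2 * (x n * x m) := by field_simp; ring
      linarith
    · simp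
  refine (Finset.sum_le_sum step).trans ?_
  rw [Finset.sum_add_distrib, Finset.sum_product, Finset.sum_product_right]
  simp only [← Finset.mul_sum]
  rw [← Finset.sum_add_distrib]
  apply Finset.sum_le_sum
  intro n _
  have h1 := mul_le_mul_of_nonneg_left (chi_sum_one n N)
    (show 0 ≤ x n ^ 2 * (n : ℝ) ^ 2 by positivity)
  have h2 := mul_le_mul_of_nonneg_left (chi_sum_inv' n N)
    (show 0 ≤ x n ^ 2 * (n : ℝ) ^ 4 by positivity)
  refine (add_le_add h1 h2).trans (le_of_eq ?_)
  by_cases hn : (n : ℝ) = 0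
  · simp [hn]
  · have ha : |(n : ℝ)| ≠ 0 := abs_ne_zero.2 hn
    have e4 : (n : ℝ) ^ 4 = |(n : ℝ)| ^ 4 := by rw [show 4 = 2 * 2 from rfl, pow_mul, pow_mul, sq_abs]
    rw [e4, ← sq_abs (n : ℝ)]
    field_simp
    ring

lemma kappa_bound (n m : ℤ) :
    |((1 : ℝ) - ((n + m).sign : ℤ) * (m.sign : ℤ))| * (m : ℝ) ^ 2 ≤
      if n * m < 0 ∧ |m| ≤ |n| then 2 * (m : ℝ) ^ 2 else 0 := by
  by_cases h : n * m < 0 ∧ |m| ≤ |n|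
  · rw [if_pos h]
    gcongr
    rcases Int.sign_trichotomy (n + m) with h1 | h1 | h1 <;>
    rcases Int.sign_trichotomy m with h2 | h2 | h2 <;> rw [h1, h2] <;> norm_num
  · rw [if_neg h]
    rcases lt_trichotomy m 0 with hm | hm | hm
    · have : n + m < 0 := by
        by_contra h3
        apply h
        have hn : 0 < n := by omega
        refine ⟨mul_neg_of_pos_of_neg hn hm, ?_⟩
        rw [abs_of_neg hm, abs_of_pos hn]; omega
      rw [Int.sign_eq_neg_one_of_neg hm, Int.sign_eq_neg_one_of_neg this]; norm_num
    · simp [hm]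
    · have : 0 < n + m := by
        by_contra h3
        apply h
        have hn : n < 0 := by omega
        refine ⟨mul_neg_of_neg_of_pos hn hm, ?_⟩
        rw [abs_of_pos hm, abs_of_neg hn]; omega
      rw [Int.sign_eq_one_of_pos hm, Int.sign_eq_one_of_pos this]; norm_num

theorem Fmagic_le_seminorms (u : ℝ → ℝ)
    (hu : ContDiff ℝ (⊤ : ℕ∞) u)
    (hper : ∀ θ : ℝ, u (θ + 2 * π) = u θ)
    (hmean : (∫ θ in (0:ℝ)..(2 * π), u θ) = 0) :
    ∀ θ : ℝ, Fmagic u θ ≤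
      (1 / π) * (∫ x in (0:ℝ)..(2 * π),
          hilbertT u x * (deriv (deriv (deriv u)) x + deriv u x))
      + (π / 2) * ∫ x in (0:ℝ)..(2 * π), (deriv u x) ^ 2 := by
  intro θ
  have h0 : SmP u := ⟨hu, hper⟩
  have h1 := h0.deriv
  have h2 := h1.deriv
  have h3 := h2.deriv
  have c1 := h0.fourierC_deriv
  have c2 := h1.fourierC_deriv
  have c3 := h2.fourierC_deriv
  set c := fourierC u with hc
  have hneg : ∀ n, c (-n) = (starRingEnd ℂ) (c n) := fourierC_neg u
  -- right-hand side
  have r31 : RepG id (fun n => fourierC (deriv (deriv (deriv u))) n + fourierC (deriv u) n)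
      (fun x => deriv (deriv (deriv u)) x + deriv u x) := by
    refine ⟨?_, fun x => ?_⟩
    · exact Summable.of_nonneg_of_le (fun _ => norm_nonneg _) (fun _ => norm_add_le _ _)
        (h3.summable.add h1.summable)
    · simpa [add_mul] using (h3.rep.2 x).add (h1.rep.2 x)
  have P1 := (h0.repH.parseval r31).mul_left (1 / π)
  have P2 := (h1.rep.parseval h1.rep).mul_left (π / 2)
  have P := P1.add P2
  have hR : (fun n : ℤ => 1 / π * (2 * π * ((-Complex.I * ((n.sign : ℤ) : ℂ) * fourierC u n) *
      (fourierC (deriv (deriv (deriv u))) (-n) + fourierC (deriv u) (-n))).re) +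
      π / 2 * (2 * π * (fourierC (deriv u) n * fourierC (deriv u) (-n)).re)) =
      fun n : ℤ => (2 * (|(n : ℝ)| ^ 3 - |(n : ℝ)|) + π ^ 2 * (n : ℝ) ^ 2) * ‖c n‖ ^ 2 := by
    ext n
    have hp := pi_ne_zero
    have hnn : c n * (starRingEnd ℂ) (c n) = ((‖c n‖ ^ 2 : ℝ) : ℂ) := by
      rw [Complex.mul_conj, Complex.normSq_eq_norm_sq]
    have hI : Complex.I ^ 2 = -1 := Complex.I_sq
    have hsg : ((n.sign : ℤ) : ℝ) * n = |(n : ℝ)| := by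
      exact_mod_cast Int.sign_mul_self_eq_abs n
    have e1 : (-Complex.I * ((n.sign : ℤ) : ℂ) * c n) *
      (fourierC (deriv (deriv (deriv u))) (-n) + fourierC (deriv u) (-n)) =
      (((|(n : ℝ)| ^ 3 - |(n : ℝ)|) * ‖c n‖ ^ 2 : ℝ) : ℂ) := by
      have e3 : |(n : ℝ)| ^ 3 - |(n : ℝ)| = ((n.sign : ℤ) : ℝ) * n * (n ^ 2 - 1) := by
        rw [hsg, ← sq_abs (n : ℝ)]; ring
      rw [e3, c3, c2, c1, hneg, Complex.ofReal_mul, ← hnn]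
      push_cast
      linear_combination ((n.sign : ℂ) * n * (n ^ 2 * (Complex.I ^ 2 - 1) + 1)) * c n * (starRingEnd ℂ) (c n) * hI
    have e2 : fourierC (deriv u) n * fourierC (deriv u) (-n) =
        (((n : ℝ) ^ 2 * ‖c n‖ ^ 2 : ℝ) : ℂ) := by
      rw [c1, c1, hneg, Complex.ofReal_mul, ← hnn]
      push_cast
      linear_combination (-(n : ℂ) ^ 2 * c n * (starRingEnd ℂ) (c n)) * hI
    rw [e1, e2, Complex.ofReal_re, Complex.ofReal_re]
    field_simp
  rw [hR] at P
  simp only [sq (deriv u _)]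
  -- left-hand side
  have q1 := (rep_mul h0.rep h2.rep).2 θ
  have q2 := (rep_mul h0.rep h2.repH).hilbertT θ
  have Q := (Complex.hasSum_re q1).neg.sub q2
  rw [Complex.ofReal_re] at Q
  change HasSum _ (Fmagic u θ) at Q
  refine hasSum_le_of_sum_le Q fun s => ?_
  have hpt : ∀ p : ℤ × ℤ,
      -((c p.1 * fourierC (deriv (deriv u)) p.2) *
        Complex.exp (Complex.I * ((p.1 + p.2 : ℤ) : ℂ) * (θ : ℂ))).re -
      (-Complex.I * (((p.1 + p.2).sign : ℤ) : ℂ) *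
        (c p.1 * (-Complex.I * ((p.2.sign : ℤ) : ℂ) * fourierC (deriv (deriv u)) p.2)) *
        Complex.exp (Complex.I * ((p.1 + p.2 : ℤ) : ℂ) * (θ : ℂ))).re ≤ (if p.1 * p.2 < 0 ∧ |p.2| ≤ |p.1| then
      2 * (p.2 : ℝ) ^ 2 * (‖c p.1‖ * ‖c p.2‖) else 0) := by
    rintro ⟨n, m⟩
    dsimp only
    rw [← Complex.neg_re, ← Complex.sub_re]
    refine (Complex.re_le_norm _).trans ?_
    have e : -(c n * fourierC (deriv (deriv u)) m *
        Complex.exp (Complex.I * ((n + m : ℤ) : ℂ) * (θ : ℂ))) -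
        -Complex.I * (((n + m).sign : ℤ) : ℂ) *
        (c n * (-Complex.I * ((m.sign : ℤ) : ℂ) * fourierC (deriv (deriv u)) m)) *
        Complex.exp (Complex.I * ((n + m : ℤ) : ℂ) * (θ : ℂ)) =
        (((1 - ((n + m).sign : ℤ) * (m.sign : ℤ)) * (m : ℝ) ^ 2 : ℝ) : ℂ) * (c n * c m) *
        Complex.exp (Complex.I * ((n + m : ℤ) : ℂ) * (θ : ℂ)) := by
      rw [c2, c1]
      have hI : Complex.I ^ 2 = -1 := Complex.I_sq
      push_cast
      generalize Complex.exp _ = E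
      linear_combination (-(m:ℂ)^2 * c n * c m * E * (1 + ((n+m).sign : ℂ) * (m.sign : ℂ) * (Complex.I ^ 2 - 1))) * hI
    rw [e, norm_mul, norm_cexp_int, mul_one, norm_mul, norm_mul, Complex.norm_real,
      Real.norm_eq_abs, abs_mul, abs_of_nonneg (sq_nonneg (m : ℝ))]
    refine (mul_le_mul_of_nonneg_right (kappa_bound n m) (by positivity)).trans ?_
    split_ifs <;> simp
  refine (Finset.sum_le_sum fun p _ => hpt p).trans ?_
  obtain ⟨N, hN⟩ : ∃ N : ℕ, s ⊆ Finset.Icc (-(N : ℤ)) (N : ℤ) ×ˢ Finset.Icc (-(N : ℤ)) (N : ℤ) := by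
    refine ⟨s.sup (fun p => p.1.natAbs + p.2.natAbs), fun p hp => ?_⟩
    have := Finset.le_sup (f := fun p : ℤ × ℤ => p.1.natAbs + p.2.natAbs) hp
    simp only [Finset.mem_product, Finset.mem_Icc]
    omega
  refine (Finset.sum_le_sum_of_subset_of_nonneg hN fun p _ _ => ?_).trans ?_
  · split_ifs <;> positivity
  refine (schur_box (fun n => ‖c n‖) N).trans ?_
  have hcoef : ∀ n : ℤ, 2 * |(n : ℝ)| ^ 3 + (n : ℝ) ^ 2 ≤
      2 * (|(n : ℝ)| ^ 3 - |(n : ℝ)|) + π ^ 2 * (n : ℝ) ^ 2 := by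
    intro n
    have hpi := pi_gt_three
    have : |(n : ℝ)| ≤ (n : ℝ) ^ 2 := by
      rw [← sq_abs]
      by_cases hn : n = 0
      · simp [hn]
      · have : (1 : ℝ) ≤ |(n : ℝ)| := by exact_mod_cast Int.one_le_abs hn
        nlinarith
    have h9 : (9 : ℝ) ≤ π ^ 2 := by nlinarith
    nlinarith [sq_nonneg (n : ℝ), mul_le_mul_of_nonneg_right h9 (sq_nonneg (n : ℝ))]
  refine (Finset.sum_le_sum fun n _ =>
    mul_le_mul_of_nonneg_right (hcoef n) (sq_nonneg ‖c n‖)).trans ?_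
  apply sum_le_hasSum _ _ P
  intro n _
  have := hcoef n
  have h' : 0 ≤ 2 * |(n : ℝ)| ^ 3 + (n : ℝ) ^ 2 := by positivity
  exact mul_nonneg (h'.trans this) (sq_nonneg _)
end

section
/- Let u : S¹ → ℝ be smooth with Fourier coefficients c_n vanishing for n ∈ {−1, 0, 1}, and let G be the function whose k-th Fourier coefficient, for |k| ≥ 2, equals (−i·sgn k)/(1 − k²) times the k-th Fourier coefficient of 2 u′·H(u′) − u″·H(u″), and whose Fourier modes with |k| ≤ 1 vanish (i.e. G = H (1+∂_θ²)^{−1}[2 u_θ H u_θ − u_θθ H u_θθ]). Then sup_θ |G(θ)| ≤ 8π ∫_{S¹} u·H(u′) dθ + 4π ∫_{S¹} (Hu)·(u‴ + u′) dθ. -/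
open MeasureTheory Real

open Complex in
/-- The exponential has norm one. -/
lemma norm_expI (n : ℤ) (θ : ℝ) : ‖Complex.exp (Complex.I * (n : ℂ) * (θ : ℂ))‖ = 1 := by
  rw [Complex.norm_exp]; simp

lemma norm_expI_neg (n : ℤ) (θ : ℝ) : ‖Complex.exp (-Complex.I * (n : ℂ) * (θ : ℂ))‖ = 1 := by
  rw [Complex.norm_exp]; simp

lemma continuous_term (f : ℝ → ℝ) (hf : Continuous f) (n : ℤ) :
    Continuous (fun θ : ℝ => (f θ : ℂ) * Complex.exp (-Complex.I * (n : ℂ) * (θ : ℂ))) := by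
  fun_prop

/-- Fourier coefficients of a continuous function are bounded. -/
lemma fourierC_bounded (f : ℝ → ℝ) (hf : Continuous f) :
    ∃ M : ℝ, 0 ≤ M ∧ ∀ n : ℤ, ‖fourierC f n‖ ≤ M := by
  obtain ⟨C, hC⟩ := (isCompact_Icc (a := (0:ℝ)) (b := 2 * π)).exists_bound_of_continuousOn
    hf.continuousOn
  have hpi := Real.pi_pos
  refine ⟨‖(1 / (2 * π) : ℂ)‖ * (|C| * |2 * π - 0|), by positivity, fun n => ?_⟩
  unfold fourierC
  rw [norm_mul]
  gcongr
  apply intervalIntegral.norm_integral_le_of_norm_le_const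
  intro x hx
  rw [Set.uIoc_of_le (by positivity)] at hx
  rw [norm_mul, norm_expI_neg, mul_one, Complex.norm_real]
  exact (hC x ⟨hx.1.le, hx.2⟩).trans (le_abs_self C)

/-- Fourier coefficients of the derivative. -/
lemma fourierC_deriv (f : ℝ → ℝ) (hf : ContDiff ℝ 1 f)
    (hper : ∀ θ : ℝ, f (θ + 2 * π) = f θ) (n : ℤ) :
    fourierC (deriv f) n = Complex.I * n * fourierC f n := by
  have hfc : Continuous f := hf.continuous
  have hdc : Continuous (deriv f) := hf.continuous_deriv le_rfl
  have hd : ∀ x : ℝ, HasDerivAt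
      (fun θ : ℝ => (f θ : ℂ) * Complex.exp (-Complex.I * (n : ℂ) * (θ : ℂ)))
      (((deriv f x : ℝ) : ℂ) * Complex.exp (-Complex.I * (n : ℂ) * (x : ℂ)) +
        (-(Complex.I * n)) * ((f x : ℂ) * Complex.exp (-Complex.I * (n : ℂ) * (x : ℂ)))) x := by
    intro x
    have h1 : HasDerivAt (fun θ : ℝ => (f θ : ℂ)) ((deriv f x : ℝ) : ℂ) x :=
      ((hf.differentiable one_ne_zero) x).hasDerivAt.ofReal_comp
    have h2 : HasDerivAt (fun θ : ℝ => -Complex.I * (n : ℂ) * (θ : ℂ))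
        (-Complex.I * (n : ℂ) * 1) x :=
      ((hasDerivAt_id x).ofReal_comp).const_mul _
    have h3 := h1.mul h2.cexp
    convert! h3 using 1
    ring
  have hi1 := (continuous_term (deriv f) hdc n)
  have hi2 := (continuous_term f hfc n)
  have hi3 : Continuous (fun x : ℝ => (-(Complex.I * n)) *
    ((f x : ℂ) * Complex.exp (-Complex.I * (n : ℂ) * (x : ℂ)))) := continuous_const.mul hi2
  have key := intervalIntegral.integral_eq_sub_of_hasDerivAt (a := 0) (b := 2 * π)
    (fun x _ => hd x) ((hi1.add hi3).intervalIntegrable _ _)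
  rw [intervalIntegral.integral_add (hi1.intervalIntegrable _ _)
    (hi3.intervalIntegrable _ _),
    intervalIntegral.integral_const_mul] at key
  have hp : f (2 * π) = f 0 := by simpa using hper 0
  have he : Complex.exp (-Complex.I * (n : ℂ) * ((2 * π : ℝ) : ℂ)) = 1 := by
    rw [Complex.exp_eq_one_iff]
    exact ⟨-n, by push_cast; ring⟩
  rw [hp, he] at key
  simp only [Complex.ofReal_zero, mul_zero, Complex.exp_zero, sub_self] at key
  unfold fourierC
  linear_combination (1 / (2 * π) : ℂ) * key

/-- conjugation symmetry -/
lemma fourierC_conj (f : ℝ → ℝ) (n : ℤ) :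
    (starRingEnd ℂ) (fourierC f n) = fourierC f (-n) := by
  unfold fourierC
  rw [map_mul, intervalIntegral.intervalIntegral_eq_integral_uIoc,
    intervalIntegral.intervalIntegral_eq_integral_uIoc, Complex.real_smul, map_mul,
    ← integral_conj, Complex.real_smul]
  congr 1
  · have h : (1 / (2 * π) : ℂ) = ((1 / (2 * π) : ℝ) : ℂ) := by push_cast; rfl
    rw [h, Complex.conj_ofReal]
  · congr 1
    · simp [Complex.conj_ofReal]
    · congr 1
      ext x
      rw [map_mul, Complex.conj_ofReal, ← Complex.exp_conj]
      simp [Complex.conj_ofReal]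

/-- The Hilbert transform as a complex-valued sum. -/
lemma hilbertT_coe (g : ℝ → ℝ) (θ : ℝ) :
    (hilbertT g θ : ℂ) = ∑' n : ℤ, -Complex.I * ((n.sign : ℤ) : ℂ) * fourierC g n *
      Complex.exp (Complex.I * (n : ℂ) * (θ : ℂ)) := by
  unfold hilbertT
  apply Complex.conj_eq_iff_re.mp
  rw [Complex.conj_tsum, ← (Equiv.neg ℤ).tsum_eq]
  congr 1
  ext n
  simp only [map_mul, map_neg, Complex.conj_I, ← Complex.exp_conj, Complex.conj_ofReal,
    Equiv.neg_apply, fourierC_conj, Int.sign_neg, neg_neg]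
  push_cast
  simp

lemma hilbertT_continuous (g : ℝ → ℝ) (hg : Summable fun n => ‖fourierC g n‖) :
    Continuous (hilbertT g) := by
  unfold hilbertT
  refine Complex.continuous_re.comp (continuous_tsum (fun n => by fun_prop) hg ?_)
  intro n θ
  rw [norm_mul, norm_mul, norm_expI, mul_one]
  refine mul_le_of_le_one_left (norm_nonneg _) ?_
  rcases Int.sign_trichotomy n with h | h | h <;> simp [h]

/-- Fourier coefficients of a product with a Hilbert transform. -/
lemma fourierC_mul_hilbertT (f g : ℝ → ℝ) (hf : Continuous f)
    (hg : Summable fun n => ‖fourierC g n‖) (k : ℤ) :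
    HasSum (fun n : ℤ => -Complex.I * ((n.sign : ℤ) : ℂ) * fourierC g n * fourierC f (k - n))
      (fourierC (fun θ => f θ * hilbertT g θ) k) := by
  obtain ⟨C, hC⟩ := (isCompact_Icc (a := (0:ℝ)) (b := 2 * π)).exists_bound_of_continuousOn
    hf.continuousOn
  have hpi := Real.pi_pos
  have hmain := intervalIntegral.hasSum_integral_of_dominated_convergence
    (μ := volume) (a := 0) (b := 2 * π)
    (F := fun (n : ℤ) (θ : ℝ) => -Complex.I * ((n.sign : ℤ) : ℂ) * fourierC g n *
      ((f θ : ℂ) * Complex.exp (-Complex.I * ((k - n : ℤ) : ℂ) * (θ : ℂ))))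
    (f := fun θ : ℝ => ((f θ * hilbertT g θ : ℝ) : ℂ) *
      Complex.exp (-Complex.I * (k : ℂ) * (θ : ℂ)))
    (fun n _ => ‖fourierC g n‖ * C) ?_ ?_ ?_ ?_ ?_
  · unfold fourierC at hmain ⊢
    convert! hmain.mul_left (1 / (2 * π) : ℂ) using 2 with n
    rw [intervalIntegral.integral_const_mul]
    ring
  · intro n
    exact (Continuous.aestronglyMeasurable (by fun_prop))
  · intro n
    filter_upwards with x hx
    rw [Set.uIoc_of_le (by positivity)] at hx
    rw [norm_mul, norm_mul, norm_mul (f x : ℂ), norm_expI_neg, mul_one, Complex.norm_real]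
    gcongr
    · refine mul_le_of_le_one_left (norm_nonneg _) ?_
      rcases Int.sign_trichotomy n with h | h | h <;> simp [h]
    · exact hC x ⟨hx.1.le, hx.2⟩
  · filter_upwards with x hx
    exact hg.mul_right C
  · exact intervalIntegrable_const
  · filter_upwards with x hx
    have hs : Summable (fun n : ℤ => -Complex.I * ((n.sign : ℤ) : ℂ) * fourierC g n *
      Complex.exp (Complex.I * (n : ℂ) * (x : ℂ))) := by
      apply Summable.of_norm_bounded hg
      intro n
      rw [norm_mul, norm_mul, norm_expI, mul_one]
      refine mul_le_of_le_one_left (norm_nonneg _) ?_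
      rcases Int.sign_trichotomy n with h | h | h <;> simp [h]
    have h2 := hs.hasSum
    rw [← hilbertT_coe] at h2
    convert! h2.mul_left ((f x : ℂ) * Complex.exp (-Complex.I * (k : ℂ) * (x : ℂ))) using 1
    · ext n
      have : Complex.exp (-Complex.I * ((k - n : ℤ) : ℂ) * (x : ℂ)) =
        Complex.exp (-Complex.I * (k : ℂ) * (x : ℂ)) * Complex.exp (Complex.I * (n : ℂ) * (x : ℂ)) := by
        rw [← Complex.exp_add]; congr 1; push_cast; ring
      rw [this]; ring
    · push_cast; ring

/-- pointwise bound by the sum of Fourier coefficients -/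
lemma abs_le_tsum (G : ℝ → ℝ) (hG : Continuous G) (hper : ∀ θ : ℝ, G (θ + 2 * π) = G θ)
    (hs : Summable fun n => ‖fourierC G n‖) (θ : ℝ) : |G θ| ≤ ∑' n, ‖fourierC G n‖ := by
  have : Fact (0 < 2 * π) := ⟨by positivity⟩
  have hp : Function.Periodic (fun x => (G x : ℂ)) (2 * π) := fun x => by simp [hper]
  let F : C(AddCircle (2 * π), ℂ) := ⟨hp.lift, by
    apply continuous_coinduced_dom.mpr
    exact (Complex.continuous_ofReal.comp hG)⟩
  have hF : ∀ x : ℝ, F (x : AddCircle (2 * π)) = (G x : ℂ) := fun x => hp.lift_coe x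
  have hco : ∀ n, fourierCoeff F n = fourierC G n := by
    intro n
    rw [fourierCoeff_eq_intervalIntegral F n 0]
    unfold fourierC
    rw [zero_add, Complex.real_smul]
    congr 1
    · push_cast; rfl
    · congr 1
      ext x
      rw [hF, fourier_coe_apply, smul_eq_mul, mul_comm]
      congr 2
      have : (π : ℂ) ≠ 0 := by exact_mod_cast Real.pi_ne_zero
      push_cast
      field_simp
  have hsum := has_pointwise_sum_fourier_series_of_summable (f := F)
    (by simpa only [funext hco] using hs.of_norm) (θ : AddCircle (2 * π))
  rw [hF] at hsum
  have h1 : ∀ n : ℤ, ‖fourierCoeff F n • fourier n (θ : AddCircle (2 * π))‖ = ‖fourierC G n‖ := by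
    intro n
    rw [norm_smul, hco, fourier_apply, Circle.norm_coe, mul_one]
  have h2 := norm_tsum_le_tsum_norm (f := fun n : ℤ =>
    fourierCoeff F n • fourier n (θ : AddCircle (2 * π))) (by simpa only [h1] using hs)
  rw [hsum.tsum_eq, Complex.norm_real, Real.norm_eq_abs] at h2
  simpa only [h1] using h2

/-- tail of the sum of inverse squares -/
lemma tail_sum (n : ℤ) (hn : n ≠ 0) :
    (∑' k : ℤ, ENNReal.ofReal (if |n| < |k| then (1 : ℝ) / (k : ℝ) ^ 2 else 0))
      ≤ ENNReal.ofReal (4 / |(n : ℝ)|) := by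
  obtain ⟨N, hN⟩ : ∃ N : ℕ, (N : ℤ) = |n| := ⟨n.natAbs, by simp⟩
  have hN0 : 0 < N := by
    have := abs_pos.mpr hn; omega
  have hNr : |(n : ℝ)| = N := by
    rw [← Int.cast_abs, ← hN]; simp
  have hbase : ∑' j : ℕ, ENNReal.ofReal (if N < j then (1 : ℝ) / (j : ℝ) ^ 2 else 0)
      ≤ ENNReal.ofReal (2 / N) := by
    rw [ENNReal.tsum_eq_iSup_nat]
    refine iSup_le fun m => ?_
    rw [← ENNReal.ofReal_sum_of_nonneg (fun i _ => by positivity)]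
    apply ENNReal.ofReal_le_ofReal
    rw [← Finset.sum_filter]
    have h1 : (Finset.range m).filter (fun j => N < j) = Finset.Ioo N m := by
      ext j; simp [and_comm]
    rw [h1]
    have h2 := sum_Ioo_inv_sq_le (α := ℝ) N m
    simp only [one_div]
    refine h2.trans ?_
    gcongr
    linarith
  rw [tsum_of_nat_of_neg_add_one ENNReal.summable ENNReal.summable]
  have e : ENNReal.ofReal (4 / |(n : ℝ)|) = ENNReal.ofReal (2 / N) + ENNReal.ofReal (2 / N) := by
    rw [← ENNReal.ofReal_add (by positivity) (by positivity), hNr]; congr 1; ring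
  rw [e]
  gcongr
  · refine le_trans (le_of_eq ?_) hbase
    congr 1; ext j
    rw [← hN]; simp
  · refine le_trans ?_ hbase
    refine le_trans (le_of_eq ?_) (ENNReal.tsum_comp_le_tsum_of_injective
      (f := fun j : ℕ => j + 1) (fun a b h => by simpa using h) _)
    congr 1; ext j
    rw [← hN, abs_neg]
    have : |((j : ℤ) + 1)| = ((j + 1 : ℕ) : ℤ) := by rw [abs_of_nonneg (by positivity)]; simp
    rw [this]
    simp only [Nat.cast_lt]
    congr 2
    push_cast
    ring_nf

lemma periodic_deriv (f : ℝ → ℝ) (hper : ∀ θ : ℝ, f (θ + 2 * π) = f θ) :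
    ∀ θ : ℝ, deriv f (θ + 2 * π) = deriv f θ := by
  intro θ
  rw [← deriv_comp_add_const]
  congr 1
  ext x
  exact hper x

lemma smooth_deriv (f : ℝ → ℝ) (hf : ContDiff ℝ (⊤ : ℕ∞) f) :
    ContDiff ℝ (⊤ : ℕ∞) (deriv f) := (contDiff_infty_iff_deriv.mp hf).2

lemma fourierC_deriv' (f : ℝ → ℝ) (hf : ContDiff ℝ (⊤ : ℕ∞) f)
    (hper : ∀ θ : ℝ, f (θ + 2 * π) = f θ) (n : ℤ) :
    fourierC (deriv f) n = Complex.I * n * fourierC f n :=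
  fourierC_deriv f (hf.of_le (by exact_mod_cast le_top)) hper n

lemma summable_fourierC (f : ℝ → ℝ) (hf : ContDiff ℝ (⊤ : ℕ∞) f)
    (hper : ∀ θ : ℝ, f (θ + 2 * π) = f θ) : Summable fun n => ‖fourierC f n‖ := by
  have hf1 := smooth_deriv f hf
  have hf2 := smooth_deriv _ hf1
  obtain ⟨M, hM0, hM⟩ := fourierC_bounded _ hf2.continuous
  have h1 : Summable fun n : ℤ => M * (1 / (n : ℝ) ^ 2) :=
    (Real.summable_one_div_int_pow.mpr (by norm_num)).mul_left M
  have h2 : Summable fun n : ℤ => if n = 0 then ‖fourierC f 0‖ else 0 :=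
    (hasSum_ite_eq (0 : ℤ) ‖fourierC f 0‖).summable
  refine Summable.of_nonneg_of_le (fun n => norm_nonneg _) (fun n => ?_) (h1.add h2)
  by_cases hn : n = 0
  · subst hn; simp
  · have h := hM n
    rw [fourierC_deriv' _ hf1 (periodic_deriv f hper), fourierC_deriv' f hf hper] at h
    have hn' : (0 : ℝ) < (n : ℝ) ^ 2 := by positivity
    simp only [hn, if_false, add_zero]
    rw [mul_one_div, le_div_iff₀ hn']
    refine le_trans (le_of_eq ?_) h
    simp only [norm_mul, Complex.norm_I, Complex.norm_intCast, one_mul]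
    rw [← sq_abs]; ring

lemma fourierC_lin (a b : ℝ) (f g : ℝ → ℝ) (hf : Continuous f) (hg : Continuous g) (k : ℤ) :
    fourierC (fun θ => a * f θ + b * g θ) k = a * fourierC f k + b * fourierC g k := by
  have e : ∀ θ : ℝ, ((a * f θ + b * g θ : ℝ) : ℂ) * Complex.exp (-Complex.I * (k : ℂ) * (θ : ℂ)) =
      a * ((f θ : ℂ) * Complex.exp (-Complex.I * (k : ℂ) * (θ : ℂ))) +
      b * ((g θ : ℂ) * Complex.exp (-Complex.I * (k : ℂ) * (θ : ℂ))) := by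
    intro θ; push_cast; ring
  have i1 : Continuous (fun θ : ℝ =>
      (a : ℂ) * ((f θ : ℂ) * Complex.exp (-Complex.I * (k : ℂ) * (θ : ℂ)))) :=
    continuous_const.mul (continuous_term f hf k)
  have i2 : Continuous (fun θ : ℝ =>
      (b : ℂ) * ((g θ : ℂ) * Complex.exp (-Complex.I * (k : ℂ) * (θ : ℂ)))) :=
    continuous_const.mul (continuous_term g hg k)
  unfold fourierC
  simp only [e]
  rw [intervalIntegral.integral_add (i1.intervalIntegrable _ _) (i2.intervalIntegrable _ _),
    intervalIntegral.integral_const_mul, intervalIntegral.integral_const_mul]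
  ring

lemma fourierC_zero_eq (f : ℝ → ℝ) :
    fourierC f 0 = (((∫ x in (0:ℝ)..(2 * π), f x) / (2 * π) : ℝ) : ℂ) := by
  unfold fourierC
  simp only [Int.cast_zero, mul_zero, zero_mul, Complex.exp_zero, mul_one]
  rw [intervalIntegral.integral_ofReal]
  push_cast
  ring

lemma sgn_mul_cast (n : ℤ) : ((n.sign : ℤ) : ℝ) * (n : ℝ) = |(n : ℝ)| := by
  rw [← Int.cast_mul, Int.sign_mul_self_eq_abs, Int.cast_abs]

lemma c_mul_neg (u : ℝ → ℝ) (n : ℤ) :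
    fourierC u n * fourierC u (-n) = ((‖fourierC u n‖ ^ 2 : ℝ) : ℂ) := by
  rw [← fourierC_conj, Complex.mul_conj, Complex.normSq_eq_norm_sq]

/-- the H^{1/2} seminorm -/
lemma hasSum_half (u : ℝ → ℝ) (hu : ContDiff ℝ (⊤ : ℕ∞) u)
    (hper : ∀ θ : ℝ, u (θ + 2 * π) = u θ) :
    HasSum (fun n : ℤ => |(n : ℝ)| * ‖fourierC u n‖ ^ 2)
      ((∫ x in (0:ℝ)..(2 * π), u x * hilbertT (deriv u) x) / (2 * π)) := by
  have h := fourierC_mul_hilbertT u (deriv u) hu.continuous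
    (summable_fourierC _ (smooth_deriv u hu) (periodic_deriv u hper)) 0
  rw [fourierC_zero_eq] at h
  rw [← Complex.hasSum_ofReal]
  convert! h using 1
  ext n
  rw [fourierC_deriv' u hu hper, zero_sub]
  have e := c_mul_neg u n
  have s : ((n.sign : ℤ) : ℂ) * (n : ℂ) = ((|(n : ℝ)| : ℝ) : ℂ) := by
    rw [← sgn_mul_cast]; push_cast; rfl
  rw [Complex.ofReal_mul, ← e, ← s]
  linear_combination (n.sign : ℂ) * n * fourierC u n * fourierC u (-n) * Complex.I_sq

/-- the H^{3/2} seminorm -/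
lemma hasSum_three_half (u : ℝ → ℝ) (hu : ContDiff ℝ (⊤ : ℕ∞) u)
    (hper : ∀ θ : ℝ, u (θ + 2 * π) = u θ) :
    HasSum (fun n : ℤ => (|(n : ℝ)| ^ 3 - |(n : ℝ)|) * ‖fourierC u n‖ ^ 2)
      ((∫ x in (0:ℝ)..(2 * π), hilbertT u x * (deriv (deriv (deriv u)) x + deriv u x))
        / (2 * π)) := by
  have s1 := smooth_deriv u hu
  have s2 := smooth_deriv _ s1
  have s3 := smooth_deriv _ s2
  have p1 := periodic_deriv u hper
  have p2 := periodic_deriv _ p1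
  have h := fourierC_mul_hilbertT
    (fun θ => 1 * deriv (deriv (deriv u)) θ + 1 * deriv u θ) u
    ((continuous_const.mul s3.continuous).add (continuous_const.mul s1.continuous))
    (summable_fourierC _ hu hper) 0
  rw [fourierC_zero_eq] at h
  rw [← Complex.hasSum_ofReal]
  convert! h using 1
  · ext n
    rw [fourierC_lin _ _ _ _ s3.continuous s1.continuous, fourierC_deriv' _ s2 p2,
      fourierC_deriv' _ s1 p1, fourierC_deriv' u hu hper, zero_sub]
    have e := c_mul_neg u n
    have s : ((n.sign : ℤ) : ℂ) * (n : ℂ) = ((|(n : ℝ)| : ℝ) : ℂ) := by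
      rw [← sgn_mul_cast]; push_cast; rfl
    have q : ((|(n : ℝ)| : ℝ) : ℂ) ^ 2 = (n : ℂ) ^ 2 := by
      rw [← Complex.ofReal_pow, sq_abs]; push_cast; rfl
    have t : ((|(n : ℝ)| ^ 3 - |(n : ℝ)| : ℝ) : ℂ) = (n.sign : ℂ) * n * (n ^ 2 - 1) := by
      rw [s, ← q]; push_cast; ring
    rw [Complex.ofReal_mul, ← e, t]
    push_cast
    linear_combination (n.sign : ℂ) * n * fourierC u n * fourierC u (-n) *
      (-1 - n ^ 2 * (Complex.I ^ 2 - 1)) * Complex.I_sq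
  · congr 3
    ext x
    ring

/-- elementary inequality for the symmetrized kernel -/
lemma kernel_bound (m n : ℤ) (x y : ℝ) (hx : 0 ≤ x) (hy : 0 ≤ y) (hm : 2 ≤ |m|) (hn : 2 ≤ |n|)
    (hk : 2 ≤ |m + n|) :
    |2 * (m : ℝ) * |(n : ℝ)| + 2 * n * |(m : ℝ)| + m ^ 2 * n ^ 2 * ((n.sign : ℤ) + (m.sign : ℤ))|
      * x * y / (((m + n : ℤ) : ℝ) ^ 2 - 1)
    ≤ 2 * ((m : ℝ) ^ 4 * x ^ 2 * (if |m| < |m + n| then 1 / ((m + n : ℤ) : ℝ) ^ 2 else 0) +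
      (n : ℝ) ^ 4 * y ^ 2 * (if |n| < |m + n| then 1 / ((m + n : ℤ) : ℝ) ^ 2 else 0)) := by
  -- the case where both are positive
  have key : ∀ a b : ℝ, 2 ≤ a → 2 ≤ b →
      (4 * a * b + 2 * a ^ 2 * b ^ 2) * x * y / ((a + b) ^ 2 - 1) ≤
      2 * (a ^ 4 * x ^ 2 * (1 / (a + b) ^ 2) + b ^ 4 * y ^ 2 * (1 / (a + b) ^ 2)) := by
    intro a b ha hb
    have hab : 4 ≤ a * b := by nlinarith
    have hs : 16 ≤ (a + b) ^ 2 := by nlinarith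
    have h1 : 4 * a * b + 2 * a ^ 2 * b ^ 2 ≤ 3 * (a ^ 2 * b ^ 2) := by nlinarith
    have h2 : 15 / 16 * (a + b) ^ 2 ≤ (a + b) ^ 2 - 1 := by linarith
    have h3 : 2 * ((a ^ 2 * x) * (b ^ 2 * y)) ≤ a ^ 4 * x ^ 2 + b ^ 4 * y ^ 2 := by
      nlinarith [sq_nonneg (a ^ 2 * x - b ^ 2 * y)]
    have hp : 0 ≤ a ^ 4 * x ^ 2 + b ^ 4 * y ^ 2 := by positivity
    calc (4 * a * b + 2 * a ^ 2 * b ^ 2) * x * y / ((a + b) ^ 2 - 1)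
        ≤ (3 * (a ^ 2 * b ^ 2)) * x * y / (15 / 16 * (a + b) ^ 2) := by
          gcongr
      _ = (3 * ((a ^ 2 * x) * (b ^ 2 * y)) * (16 / 15)) / (a + b) ^ 2 := by
          field_simp
      _ ≤ (2 * (a ^ 4 * x ^ 2 + b ^ 4 * y ^ 2)) / (a + b) ^ 2 := by
          refine div_le_div_of_nonneg_right ?_ (by positivity)
          linarith
      _ = _ := by ring
  have hR : 0 ≤ 2 * ((m : ℝ) ^ 4 * x ^ 2 * (if |m| < |m + n| then 1 / ((m + n : ℤ) : ℝ) ^ 2 else 0)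
      + (n : ℝ) ^ 4 * y ^ 2 * (if |n| < |m + n| then 1 / ((m + n : ℤ) : ℝ) ^ 2 else 0)) := by
    have : ∀ p : Prop, ∀ [Decidable p], 0 ≤ (if p then 1 / ((m + n : ℤ) : ℝ) ^ 2 else 0) := by
      intro p _; split_ifs <;> positivity
    have := this (|m| < |m + n|)
    positivity
  rcases lt_trichotomy m 0 with hm0 | hm0 | hm0
  · rcases lt_trichotomy n 0 with hn0 | hn0 | hn0
    · have c1 : |m| < |m + n| := by
        rw [abs_of_neg hm0, abs_of_neg (by omega)]; omega
      have c2 : |n| < |m + n| := by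
        rw [abs_of_neg hn0, abs_of_neg (by omega)]; omega
      rw [if_pos c1, if_pos c2]
      rw [abs_of_neg hm0] at hm
      rw [abs_of_neg hn0] at hn
      have hm' : (2 : ℝ) ≤ -m := by exact_mod_cast hm
      have hn' : (2 : ℝ) ≤ -n := by exact_mod_cast hn
      have := key (-m) (-n) hm' hn'
      rw [abs_of_neg (show (m : ℝ) < 0 by linarith), abs_of_neg (show (n : ℝ) < 0 by linarith),
        Int.sign_eq_neg_one_of_neg hm0, Int.sign_eq_neg_one_of_neg hn0]
      have e : (2 * (m : ℝ) * -(n : ℝ) + 2 * n * -(m : ℝ) + m ^ 2 * n ^ 2 *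
          (((-1 : ℤ) : ℝ) + ((-1 : ℤ) : ℝ))) =
          -(4 * (-m : ℝ) * (-n) + 2 * (-m : ℝ) ^ 2 * (-n : ℝ) ^ 2) := by push_cast; ring
      have hmn : 0 ≤ (-m : ℝ) * (-n) := by nlinarith
      rw [e, abs_neg, abs_of_nonneg (by nlinarith [sq_nonneg ((m : ℝ) * n)])]
      have e2 : ((m + n : ℤ) : ℝ) ^ 2 = (-(m : ℝ) + -n) ^ 2 := by push_cast; ring
      rw [e2]
      refine this.trans (le_of_eq ?_)
      ring
    · subst hn0; simp at hn
    · refine le_trans (le_of_eq ?_) hR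
      rw [abs_of_neg (show (m : ℝ) < 0 by exact_mod_cast hm0),
        abs_of_pos (show (0 : ℝ) < n by exact_mod_cast hn0),
        Int.sign_eq_neg_one_of_neg hm0, Int.sign_eq_one_of_pos hn0]
      have e : (2 * (m : ℝ) * (n : ℝ) + 2 * n * -(m : ℝ) + m ^ 2 * n ^ 2 *
          (((1 : ℤ) : ℝ) + ((-1 : ℤ) : ℝ))) = 0 := by push_cast; ring
      rw [e]; simp
  · subst hm0; simp at hm
  · rcases lt_trichotomy n 0 with hn0 | hn0 | hn0
    · refine le_trans (le_of_eq ?_) hR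
      rw [abs_of_pos (show (0 : ℝ) < m by exact_mod_cast hm0),
        abs_of_neg (show (n : ℝ) < 0 by exact_mod_cast hn0),
        Int.sign_eq_one_of_pos hm0, Int.sign_eq_neg_one_of_neg hn0]
      have e : (2 * (m : ℝ) * -(n : ℝ) + 2 * n * (m : ℝ) + m ^ 2 * n ^ 2 *
          (((-1 : ℤ) : ℝ) + ((1 : ℤ) : ℝ))) = 0 := by push_cast; ring
      rw [e]; simp
    · subst hn0; simp at hn
    · have c1 : |m| < |m + n| := by
        rw [abs_of_pos hm0, abs_of_pos (by omega)]; omega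
      have c2 : |n| < |m + n| := by
        rw [abs_of_pos hn0, abs_of_pos (by omega)]; omega
      rw [if_pos c1, if_pos c2]
      rw [abs_of_pos hm0] at hm
      rw [abs_of_pos hn0] at hn
      have hm' : (2 : ℝ) ≤ m := by exact_mod_cast hm
      have hn' : (2 : ℝ) ≤ n := by exact_mod_cast hn
      have := key m n hm' hn'
      rw [abs_of_pos (show (0 : ℝ) < m by linarith), abs_of_pos (show (0 : ℝ) < n by linarith),
        Int.sign_eq_one_of_pos hm0, Int.sign_eq_one_of_pos hn0]
      have e : (2 * (m : ℝ) * (n : ℝ) + 2 * n * (m : ℝ) + m ^ 2 * n ^ 2 *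
          (((1 : ℤ) : ℝ) + ((1 : ℤ) : ℝ))) =
          (4 * (m : ℝ) * n + 2 * (m : ℝ) ^ 2 * (n : ℝ) ^ 2) := by push_cast; ring
      rw [e, abs_of_nonneg (by positivity)]
      push_cast
      exact this

/-- The bound for one Fourier coefficient, summed over one index. -/
lemma coef_bound (u : ℝ → ℝ) (hu : ContDiff ℝ (⊤ : ℕ∞) u)
    (hper : ∀ θ : ℝ, u (θ + 2 * π) = u θ)
    (hmodes : ∀ n : ℤ, n.natAbs ≤ 1 → fourierC u n = 0) (k : ℤ) (hk : 2 ≤ k.natAbs) :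
    ‖(-Complex.I * ((k.sign : ℤ) : ℂ)) / (1 - (k : ℂ) ^ 2) *
        fourierC (fun θ => 2 * deriv u θ * hilbertT (deriv u) θ
          - deriv (deriv u) θ * hilbertT (deriv (deriv u)) θ) k‖ₑ ≤
    ∑' n : ℤ, ENNReal.ofReal (2 * ((n : ℝ) ^ 4 * ‖fourierC u n‖ ^ 2 *
      (if |n| < |k| then 1 / (k : ℝ) ^ 2 else 0))) := by
  have s1 := smooth_deriv u hu
  have s2 := smooth_deriv _ s1
  have p1 := periodic_deriv u hper
  have p2 := periodic_deriv _ p1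
  have su1 := summable_fourierC _ s1 p1
  have su2 := summable_fourierC _ s2 p2
  have h1 := fourierC_mul_hilbertT (deriv u) (deriv u) s1.continuous su1 k
  have h2 := fourierC_mul_hilbertT (deriv (deriv u)) (deriv (deriv u)) s2.continuous su2 k
  have hP : fourierC (fun θ => 2 * deriv u θ * hilbertT (deriv u) θ
          - deriv (deriv u) θ * hilbertT (deriv (deriv u)) θ) k =
      2 * fourierC (fun θ => deriv u θ * hilbertT (deriv u) θ) k +
      (-1) * fourierC (fun θ => deriv (deriv u) θ * hilbertT (deriv (deriv u)) θ) k := by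
    have := fourierC_lin 2 (-1) (fun θ => deriv u θ * hilbertT (deriv u) θ)
      (fun θ => deriv (deriv u) θ * hilbertT (deriv (deriv u)) θ)
      (s1.continuous.mul (hilbertT_continuous _ su1))
      (s2.continuous.mul (hilbertT_continuous _ su2)) k
    push_cast at this
    rw [← this]
    congr 1
    ext θ
    ring
  have h3 := (h1.mul_left 2).add (h2.mul_left (-1))
  rw [← hP] at h3
  set P := fourierC (fun θ => 2 * deriv u θ * hilbertT (deriv u) θ
          - deriv (deriv u) θ * hilbertT (deriv (deriv u)) θ) k with hPdef
  have h4 := (Equiv.subLeft k).hasSum_iff.mpr h3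
  have h5 := ((h3.add h4).mul_left ((-Complex.I * ((k.sign : ℤ) : ℂ)) / (1 - (k : ℂ) ^ 2)))
  set b : ℤ → ℝ := fun n => 2 * ((n : ℝ) ^ 4 * ‖fourierC u n‖ ^ 2 *
      (if |n| < |k| then 1 / (k : ℝ) ^ 2 else 0)) with hb
  have hb0 : ∀ n, 0 ≤ b n := by
    intro n
    simp only [hb]
    have : 0 ≤ (if |n| < |k| then 1 / (k : ℝ) ^ 2 else 0) := by split_ifs <;> positivity
    positivity
  have hk2 : 2 ≤ |k| := by rw [Int.abs_eq_natAbs]; exact_mod_cast hk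
  have hk2r : (2 : ℝ) ≤ |(k : ℝ)| := by exact_mod_cast hk2
  have hkpos : 0 < (k : ℝ) ^ 2 - 1 := by rw [← sq_abs]; nlinarith
  have hfac : ‖(-Complex.I * ((k.sign : ℤ) : ℂ)) / (1 - (k : ℂ) ^ 2)‖ ≤ 1 / ((k : ℝ) ^ 2 - 1) := by
    rw [norm_div]
    have e : (1 - (k : ℂ) ^ 2) = ((-((k : ℝ) ^ 2 - 1) : ℝ) : ℂ) := by push_cast; ring
    rw [e, Complex.norm_real, norm_neg, Real.norm_of_nonneg hkpos.le]
    gcongr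
    rcases Int.sign_trichotomy k with h | h | h <;> simp [h]
  have hterm : ∀ n : ℤ, ‖(-Complex.I * ((k.sign : ℤ) : ℂ)) / (1 - (k : ℂ) ^ 2) *
      ((2 * (-Complex.I * ((n.sign : ℤ) : ℂ) * fourierC (deriv u) n * fourierC (deriv u) (k - n)) +
      (-1) * (-Complex.I * ((n.sign : ℤ) : ℂ) * fourierC (deriv (deriv u)) n *
        fourierC (deriv (deriv u)) (k - n))) +
      (2 * (-Complex.I * (((k - n).sign : ℤ) : ℂ) * fourierC (deriv u) (k - n) *
        fourierC (deriv u) (k - (k - n))) +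
      (-1) * (-Complex.I * (((k - n).sign : ℤ) : ℂ) * fourierC (deriv (deriv u)) (k - n) *
        fourierC (deriv (deriv u)) (k - (k - n)))))‖ ≤ b (k - n) + b n := by
    intro n
    have hz : ∀ j : ℤ, fourierC u j ≠ 0 → 2 ≤ |j| := by
      intro j hj
      by_contra hcon
      exact hj (hmodes j (by rw [Int.abs_eq_natAbs] at hcon; omega))
    obtain ⟨m, hm⟩ : ∃ m, m = k - n := ⟨_, rfl⟩
    have hkm : k = m + n := by omega
    rw [sub_sub_cancel, ← hm]
    simp only [fourierC_deriv' _ s1 p1, fourierC_deriv' u hu hper]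
    have sn : ((n.sign : ℤ) : ℂ) * (n : ℂ) = ((|(n : ℝ)| : ℝ) : ℂ) := by
      rw [← sgn_mul_cast]; push_cast; rfl
    have sm : ((m.sign : ℤ) : ℂ) * (m : ℂ) = ((|(m : ℝ)| : ℝ) : ℂ) := by
      rw [← sgn_mul_cast]; push_cast; rfl
    have e : (2 * (-Complex.I * ((n.sign : ℤ) : ℂ) * (Complex.I * n * fourierC u n) *
          (Complex.I * m * fourierC u m)) +
        (-1) * (-Complex.I * ((n.sign : ℤ) : ℂ) * (Complex.I * n * (Complex.I * n * fourierC u n)) *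
          (Complex.I * m * (Complex.I * m * fourierC u m))) +
        (2 * (-Complex.I * ((m.sign : ℤ) : ℂ) * (Complex.I * m * fourierC u m) *
          (Complex.I * n * fourierC u n)) +
        (-1) * (-Complex.I * ((m.sign : ℤ) : ℂ) * (Complex.I * m * (Complex.I * m * fourierC u m)) *
          (Complex.I * n * (Complex.I * n * fourierC u n))))) =
        Complex.I * ((2 * (m : ℝ) * |(n : ℝ)| + 2 * n * |(m : ℝ)| +
          m ^ 2 * n ^ 2 * ((n.sign : ℤ) + (m.sign : ℤ)) : ℝ) : ℂ) *
          fourierC u m * fourierC u n := by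
      have I2 := Complex.I_sq
      have I3 : Complex.I ^ 3 = -Complex.I := Complex.I_pow_three
      have I5 : Complex.I ^ 5 = Complex.I := by
        rw [show (5 : ℕ) = 4 + 1 from rfl, pow_succ, Complex.I_pow_four, one_mul]
      simp only [Complex.ofReal_add, Complex.ofReal_mul, Complex.ofReal_pow, ← sn, ← sm,
        Complex.ofReal_intCast, Complex.ofReal_ofNat]
      ring_nf
      simp only [I3, I5]
      ring
    rw [e, norm_mul, norm_mul, norm_mul, norm_mul, Complex.norm_I, one_mul, Complex.norm_real,
      Real.norm_eq_abs]
    by_cases hcm : fourierC u m = 0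
    · rw [hcm]; simp only [norm_zero, mul_zero, zero_mul]; exact add_nonneg (hb0 _) (hb0 _)
    by_cases hcn : fourierC u n = 0
    · rw [hcn]; simp only [norm_zero, mul_zero]; exact add_nonneg (hb0 _) (hb0 _)
    have kb := kernel_bound m n ‖fourierC u m‖ ‖fourierC u n‖ (norm_nonneg _) (norm_nonneg _)
      (hz m hcm) (hz n hcn) (by rw [← hkm]; exact hk2)
    rw [← hkm] at kb
    calc _ ≤ 1 / ((k : ℝ) ^ 2 - 1) * (|2 * (m : ℝ) * |(n : ℝ)| + 2 * n * |(m : ℝ)| +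
          m ^ 2 * n ^ 2 * ((n.sign : ℤ) + (m.sign : ℤ))| * ‖fourierC u m‖ * ‖fourierC u n‖) := by
            gcongr
      _ = |2 * (m : ℝ) * |(n : ℝ)| + 2 * n * |(m : ℝ)| +
          m ^ 2 * n ^ 2 * ((n.sign : ℤ) + (m.sign : ℤ))| * ‖fourierC u m‖ * ‖fourierC u n‖ /
          ((k : ℝ) ^ 2 - 1) := by ring
      _ ≤ _ := kb
      _ = b m + b n := by simp only [hb]; ring
  have h6 : ‖(-Complex.I * ((k.sign : ℤ) : ℂ)) / (1 - (k : ℂ) ^ 2) * (P + P)‖ₑ ≤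
      ∑' n, ENNReal.ofReal (b (k - n) + b n) := by
    rw [← h5.tsum_eq]
    refine enorm_tsum_le_tsum_enorm.trans (ENNReal.tsum_le_tsum fun n => ?_)
    rw [← ofReal_norm]
    exact ENNReal.ofReal_le_ofReal (hterm n)
  have h7 : ∑' n, ENNReal.ofReal (b (k - n) + b n) = 2 * ∑' n, ENNReal.ofReal (b n) := by
    simp only [fun n => ENNReal.ofReal_add (hb0 (k - n)) (hb0 n)]
    rw [ENNReal.tsum_add, two_mul]
    congr 1
    exact (Equiv.subLeft k).tsum_eq (fun n => ENNReal.ofReal (b n))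
  rw [h7, ← two_mul, mul_left_comm, enorm_mul] at h6
  have h8 : ‖(2 : ℂ)‖ₑ = 2 := by
    rw [← ofReal_norm]; simp
  rw [h8] at h6
  exact (ENNReal.mul_le_mul_iff_right (by simp) (by simp)).mp h6

/-- Bound for `G = H (1+∂²_θ)⁻¹[2 u′ H u′ − u″ H u″]`:
`sup_θ |G| ≤ 8π ‖u‖²_{Ḣ^{1/2}} + 4π ‖u‖²_{Ḣ^{3/2}}`.  The function `G` is characterized by
its Fourier coefficients. -/
theorem G_bound (u : ℝ → ℝ)
    (hu : ContDiff ℝ (⊤ : ℕ∞) u)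
    (hper : ∀ θ : ℝ, u (θ + 2 * π) = u θ)
    (hmodes : ∀ n : ℤ, n.natAbs ≤ 1 → fourierC u n = 0)
    (G : ℝ → ℝ) (hGcont : Continuous G) (hGper : ∀ θ : ℝ, G (θ + 2 * π) = G θ)
    (hGcoef : ∀ k : ℤ, 2 ≤ k.natAbs →
      fourierC G k = (-Complex.I * ((k.sign : ℤ) : ℂ)) / (1 - (k : ℂ) ^ 2) *
        fourierC (fun θ => 2 * deriv u θ * hilbertT (deriv u) θ
          - deriv (deriv u) θ * hilbertT (deriv (deriv u)) θ) k)
    (hGlow : ∀ k : ℤ, k.natAbs ≤ 1 → fourierC G k = 0) :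
    ∀ θ : ℝ, |G θ| ≤
      8 * π * (∫ x in (0:ℝ)..(2 * π), u x * hilbertT (deriv u) x)
      + 4 * π * ∫ x in (0:ℝ)..(2 * π),
          hilbertT u x * (deriv (deriv (deriv u)) x + deriv u x) := by
  
  intro θ
  set S1 := ∫ x in (0:ℝ)..(2 * π), u x * hilbertT (deriv u) x with hS1
  set S3 := ∫ x in (0:ℝ)..(2 * π),
          hilbertT u x * (deriv (deriv (deriv u)) x + deriv u x) with hS3
  have hs1 := hasSum_half u hu hper
  have hs3 := hasSum_three_half u hu hper
  rw [← hS1] at hs1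
  rw [← hS3] at hs3
  have hpi := Real.pi_gt_three
  have hsum := (hs1.mul_left (16 * π ^ 2)).add (hs3.mul_left (8 * π ^ 2))
  have hval : 16 * π ^ 2 * (S1 / (2 * π)) + 8 * π ^ 2 * (S3 / (2 * π)) =
      8 * π * S1 + 4 * π * S3 := by
    field_simp
    ring
  rw [hval] at hsum
  have hcube : Summable (fun n : ℤ => 8 * (|(n : ℝ)| ^ 3 * ‖fourierC u n‖ ^ 2)) := by
    refine ((hs1.add hs3).summable.mul_left 8).congr fun n => ?_
    ring
  have hle : ∑' n : ℤ, 8 * (|(n : ℝ)| ^ 3 * ‖fourierC u n‖ ^ 2) ≤ 8 * π * S1 + 4 * π * S3 := by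
    refine hasSum_le (fun n => ?_) hcube.hasSum hsum
    have h1 : 0 ≤ |(n : ℝ)| ^ 3 * ‖fourierC u n‖ ^ 2 := by positivity
    have h2 : 0 ≤ |(n : ℝ)| * ‖fourierC u n‖ ^ 2 := by positivity
    have h3 : (1 : ℝ) ≤ π ^ 2 := by nlinarith
    nlinarith [mul_nonneg (sub_nonneg.mpr h3) h1, mul_nonneg (sq_nonneg π) h2]
  have hE : ∑' k : ℤ, ‖fourierC G k‖ₑ ≤
      ENNReal.ofReal (∑' n : ℤ, 8 * (|(n : ℝ)| ^ 3 * ‖fourierC u n‖ ^ 2)) := by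
    calc ∑' k : ℤ, ‖fourierC G k‖ₑ
        ≤ ∑' k : ℤ, ∑' n : ℤ, ENNReal.ofReal (2 * ((n : ℝ) ^ 4 * ‖fourierC u n‖ ^ 2 *
            (if |n| < |k| then 1 / (k : ℝ) ^ 2 else 0))) := by
          refine ENNReal.tsum_le_tsum fun k => ?_
          by_cases hk : 2 ≤ k.natAbs
          · rw [hGcoef k hk]
            exact coef_bound u hu hper hmodes k hk
          · rw [hGlow k (by omega)]
            simp
      _ = ∑' n : ℤ, ∑' k : ℤ, ENNReal.ofReal (2 * ((n : ℝ) ^ 4 * ‖fourierC u n‖ ^ 2 *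
            (if |n| < |k| then 1 / (k : ℝ) ^ 2 else 0))) := ENNReal.tsum_comm
      _ ≤ ∑' n : ℤ, ENNReal.ofReal (8 * (|(n : ℝ)| ^ 3 * ‖fourierC u n‖ ^ 2)) := by
          refine ENNReal.tsum_le_tsum fun n => ?_
          by_cases hn : n = 0
          · subst hn; simp
          have hn' : 0 < |(n : ℝ)| := by positivity
          simp only [← mul_assoc]
          simp only [fun k : ℤ => ENNReal.ofReal_mul
            (p := 2 * (n : ℝ) ^ 4 * ‖fourierC u n‖ ^ 2)
            (q := if |n| < |k| then 1 / (k : ℝ) ^ 2 else 0) (by positivity)]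
          rw [ENNReal.tsum_mul_left]
          refine (mul_le_mul_right (tail_sum n hn) _).trans ?_
          rw [← ENNReal.ofReal_mul (by positivity)]
          apply ENNReal.ofReal_le_ofReal
          have : (n : ℝ) ^ 4 = |(n : ℝ)| ^ 4 := by
            rw [← abs_pow]; exact (abs_of_nonneg (by positivity)).symm
          rw [this]
          apply le_of_eq
          field_simp
          ring
      _ = _ := (ENNReal.ofReal_tsum_of_nonneg (fun n => by positivity) hcube).symm
  have hGs : Summable fun k => ‖fourierC G k‖ := by
    have hne : ∑' k : ℤ, ‖fourierC G k‖ₑ ≠ ⊤ := ne_top_of_le_ne_top ENNReal.ofReal_ne_top hE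
    have := ENNReal.summable_toReal hne
    simpa using this
  refine (abs_le_tsum G hGcont hGper hGs θ).trans (le_trans ?_ hle)
  have h0 : (0:ℝ) ≤ ∑' n : ℤ, 8 * (|(n : ℝ)| ^ 3 * ‖fourierC u n‖ ^ 2) :=
    tsum_nonneg fun n => by positivity
  rw [← ENNReal.ofReal_le_ofReal_iff h0,
    ENNReal.ofReal_tsum_of_nonneg (fun n => norm_nonneg _) hGs]
  simpa only [ofReal_norm] using hE
end
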